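/- arXiv:1908.00736 — 2 statements merged into one kernel-verified Lean document; each statement's English description precedes it below -/
import Mathlib

section
/- Let α > −1 be real, N ≥ 1, and a > 0. For tuples x = (x_1,…,x_N) of pairwise distinct positive reals and y = (y_1,…,y_N) of pairwise distinct positive reals, define q(x,y) := det_{1≤i,j≤N}[ (y_j^{α+1} / x_i^α) · e^{−(x_i² + y_j²)/2} · I_α(x_i y_j) ]. Then, as (x, y) tends to ((a,…,a), (0,…,0)) through such tuples, the ratio q(x,y) / ( (∏_{k=1}^N y_k^{2α+1}) · Δ(x) · Δ(y²) ) converges to a^{N(N−1)/2} · e^{−a²N/2} · 2^{−N(N−1+2α)/2} / ∏_{k=1}^N ( Γ(k) · Γ(α+k) ). -/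
open Filter

/-- The modified Bessel function of the first kind, for `x > 0`,
`I_α(x) = Σ_{k=0}^∞ (x/2)^{2k+α} / (k! Γ(k+α+1))`. -/
noncomputable def besselI (α x : ℝ) : ℝ :=
  ∑' k : ℕ, (x / 2) ^ (2 * (k : ℝ) + α) / ((Nat.factorial k : ℝ) * Real.Gamma ((k : ℝ) + α + 1))

/-- The Vandermonde product `Δ(x) = ∏_{1 ≤ j < k ≤ N} (x_k - x_j)`. -/
def vandermondeProd {N : ℕ} (x : Fin N → ℝ) : ℝ :=
  ∏ p ∈ Finset.univ.filter (fun p : Fin N × Fin N => p.1 < p.2), (x p.2 - x p.1)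

/-- Newton coefficients. -/
noncomputable def nH : ℕ → ℕ → (ℕ → ℝ) → ℝ
  | 0, 0, _ => 1
  | 0, (_ + 1), _ => 0
  | (k + 1), 0, v => v 0 * nH k 0 v
  | (k + 1), (j + 1), v => nH k j v + v (j + 1) * nH k (j + 1) v

/-- Newton basis. -/
noncomputable def nu (v : ℕ → ℝ) (j : ℕ) (x : ℝ) : ℝ := ∏ l ∈ Finset.range j, (x - v l)

theorem newton (v : ℕ → ℝ) (m : ℕ) (x : ℝ) (hx : nu v (m + 1) x = 0) (k : ℕ) :
    x ^ k = ∑ j ∈ Finset.range (m + 1), nH k j v * nu v j x := by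
  induction k with
  | zero =>
    rw [Finset.sum_range_succ']
    simp [nH, nu]
  | succ k ih =>
    have hs : ∀ j, x * nu v j x = nu v (j + 1) x + v j * nu v j x := by
      intro j
      simp only [nu, Finset.prod_range_succ]
      ring
    have h1 : x ^ (k + 1) = ∑ j ∈ Finset.range (m + 1), nH k j v * nu v (j + 1) x
        + ∑ j ∈ Finset.range (m + 1), v j * nH k j v * nu v j x := by
      rw [pow_succ, ih, Finset.sum_mul, ← Finset.sum_add_distrib]
      refine Finset.sum_congr rfl fun j _ => ?_
      linear_combination nH k j v * hs j
    rw [h1, Finset.sum_range_succ, hx, Finset.sum_range_succ', Finset.sum_range_succ' (fun j => nH (k+1) j v * nu v j x)]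
    simp only [nH, add_mul, Finset.sum_add_distrib]
    ring

theorem nH_bound (v : ℕ → ℝ) (R : ℝ) (hR : 0 ≤ R) (hv : ∀ l, |v l| ≤ R) (k j : ℕ) :
    |nH k j v| ≤ (1 + R) ^ k := by
  induction k generalizing j with
  | zero => cases j <;> simp [nH]
  | succ k ih =>
    have hp : 0 ≤ (1 + R) ^ k := by positivity
    have h1 : ∀ l j, |v l * nH k j v| ≤ R * (1 + R) ^ k := by
      intro l j
      rw [abs_mul]
      exact mul_le_mul (hv l) (ih j) (abs_nonneg _) hR
    cases j with
    | zero =>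
      simp only [nH]
      refine (h1 0 0).trans ?_
      rw [pow_succ]; nlinarith
    | succ j =>
      simp only [nH]
      refine (abs_add_le _ _).trans ?_
      have := h1 (j+1) (j+1)
      have := ih j
      rw [pow_succ]; nlinarith

theorem nH_cont (k j : ℕ) : Continuous (nH k j) := by
  induction k generalizing j with
  | zero => cases j <;> (simp only [nH]; fun_prop)
  | succ k ih =>
    cases j with
    | zero =>
      have := ih 0
      have h : nH (k+1) 0 = fun v => v 0 * nH k 0 v := by ext v; simp [nH]
      rw [h]; fun_prop
    | succ j =>
      have := ih j
      have := ih (j+1)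
      have h : nH (k+1) (j+1) = fun v => nH k j v + v (j + 1) * nH k (j + 1) v := by
        ext v; simp [nH]
      rw [h]; fun_prop

theorem nH_zero (k j : ℕ) : nH k j 0 = if k = j then 1 else 0 := by
  induction k generalizing j with
  | zero => cases j <;> simp [nH]
  | succ k ih => cases j <;> simp [nH, ih]

theorem nH_lt (v : ℕ → ℝ) (k j : ℕ) (h : k < j) : nH k j v = 0 := by
  induction k generalizing j with
  | zero =>
    cases j with
    | zero => omega
    | succ j => simp [nH]
  | succ k ih =>
    cases j with
    | zero => omega
    | succ j => simp [nH, ih j (by omega), ih (j+1) (by omega)]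

theorem nH_diag (v : ℕ → ℝ) (k : ℕ) : nH k k v = 1 := by
  induction k with
  | zero => simp [nH]
  | succ k ih => simp [nH, ih, nH_lt v k (k+1) (by omega)]

/-- extension by zero -/
noncomputable def ex {N : ℕ} (u : Fin N → ℝ) : ℕ → ℝ := fun n => if h : n < N then u ⟨n, h⟩ else 0

theorem ex_cont {N : ℕ} : Continuous (ex (N := N)) := by
  refine continuous_pi fun n => ?_
  unfold ex
  by_cases h : n < N
  · simp only [h, dite_true]; fun_prop
  · simp only [h, dite_false]; fun_prop

theorem ex_coe {N : ℕ} (u : Fin N → ℝ) (i : Fin N) : ex u i = u i := by simp [ex]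

theorem ex_zero {N : ℕ} : ex (0 : Fin N → ℝ) = 0 := by ext n; simp [ex]

theorem ex_bound {N : ℕ} (u : Fin N → ℝ) (l : ℕ) : |ex u l| ≤ ‖u‖ := by
  unfold ex
  split_ifs with h
  · exact norm_le_pi_norm u ⟨l, h⟩
  · simp

theorem nu_vanish {N : ℕ} (u : Fin N → ℝ) (i : Fin N) (m : ℕ) (h : (i : ℕ) < m) :
    nu (ex u) m (u i) = 0 := by
  unfold nu
  refine Finset.prod_eq_zero (Finset.mem_range.2 h) ?_
  rw [ex_coe]; ring

/-- Newton matrix -/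
noncomputable def nA {N : ℕ} (u : Fin N → ℝ) : Matrix (Fin N) (Fin N) ℝ :=
  Matrix.of fun i j => nu (ex u) j (u i)

theorem nA_det {N : ℕ} (u : Fin N → ℝ) : (nA u).det = vandermondeProd u := by
  rw [Matrix.det_of_isLowerTriangular]
  · unfold vandermondeProd
    rw [Finset.prod_filter, ← Finset.univ_product_univ, Finset.prod_product_right]
    refine Finset.prod_congr rfl fun i _ => ?_
    simp only [nA, Matrix.of_apply, nu]
    have : ∀ l : Fin N, (if l < i then u i - u l else 1) =
        (fun n : ℕ => if n < (i : ℕ) then u i - ex u n else 1) l := by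
      intro l; simp [ex_coe]
    simp only [this]
    rw [Fin.prod_univ_eq_prod_range (fun n : ℕ => if n < (i : ℕ) then u i - ex u n else 1) N,
      ← Finset.prod_filter]
    refine Finset.prod_congr ?_ fun _ _ => rfl
    ext n; simp; omega
  · intro i j h
    exact nu_vanish u i j h

theorem pairs_card (N : ℕ) :
    (Finset.univ.filter (fun p : Fin N × Fin N => p.1 < p.2)).card = N * (N - 1) / 2 := by
  rw [Finset.card_filter, ← Finset.univ_product_univ, Finset.sum_product_right,
    ← Finset.sum_range_id, ← Fin.sum_univ_eq_sum_range]
  refine Finset.sum_congr rfl fun i _ => ?_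
  rw [← Finset.card_filter]
  have : (Finset.univ.filter fun x : Fin N => x < i) = Finset.Iio i := by ext; simp
  rw [this, Fin.card_Iio]

/-- coefficient -/
noncomputable def cc (α : ℝ) (k : ℕ) : ℝ :=
  1 / ((Nat.factorial k : ℝ) * Real.Gamma ((k : ℝ) + α + 1))

theorem cc_pos (α : ℝ) (hα : -1 < α) (k : ℕ) : 0 < cc α k := by
  have : 0 < Real.Gamma ((k : ℝ) + α + 1) :=
    Real.Gamma_pos_of_pos (by have : (0:ℝ) ≤ k := k.cast_nonneg
                              linarith)
  unfold cc; positivity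

theorem cc_succ (α : ℝ) (hα : -1 < α) (k : ℕ) :
    cc α (k + 1) = cc α k * (1 / (((k : ℝ) + 1) * ((k : ℝ) + α + 1))) := by
  have h0 : (0:ℝ) < (k : ℝ) + α + 1 := by
    have : (0:ℝ) ≤ k := k.cast_nonneg
    linarith
  have hG := Real.Gamma_add_one h0.ne'
  unfold cc
  have : ((k + 1 : ℕ) : ℝ) + α + 1 = (k : ℝ) + α + 1 + 1 := by push_cast; ring
  rw [this, hG, Nat.factorial_succ]
  push_cast
  rw [div_mul_div_comm]
  congr 1 <;> ring

theorem cc_summable (α : ℝ) (hα : -1 < α) (r : ℝ) (hr : 0 < r) :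
    Summable fun k => cc α k * r ^ k := by
  refine summable_of_ratio_test_tendsto_lt_one (l := 0) zero_lt_one ?_ ?_
  · exact Filter.Eventually.of_forall fun k => (mul_pos (cc_pos α hα k) (pow_pos hr k)).ne'
  · have h : ∀ k : ℕ, ‖cc α (k+1) * r ^ (k+1)‖ / ‖cc α k * r ^ k‖ =
        r * ((1 / ((k : ℝ) + 1)) * ((k : ℝ) + (α + 1))⁻¹) := by
      intro k
      have h1 := cc_pos α hα k
      have h2 := cc_pos α hα (k+1)
      rw [Real.norm_of_nonneg (by positivity), Real.norm_of_nonneg (by positivity), cc_succ α hα]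
      have h0 : (0:ℝ) < (k : ℝ) + α + 1 := by
        have : (0:ℝ) ≤ k := k.cast_nonneg
        linarith
      rw [← add_assoc]
      field_simp
      ring
    simp only [h]
    have t1 : Tendsto (fun k : ℕ => 1 / ((k : ℝ) + 1)) atTop (nhds 0) :=
      tendsto_one_div_add_atTop_nhds_zero_nat
    have t2 : Tendsto (fun k : ℕ => ((k : ℝ) + (α + 1))⁻¹) atTop (nhds 0) :=
      tendsto_inv_atTop_zero.comp
        (tendsto_atTop_add_const_right _ _ tendsto_natCast_atTop_atTop)
    simpa using (t1.mul t2).const_mul r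

/-- the core matrix -/
noncomputable def nG (α : ℝ) {N : ℕ} (u v : Fin N → ℝ) : Matrix (Fin N) (Fin N) ℝ :=
  Matrix.of fun i j => ∑' k, cc α k * (nH k i (ex u) * nH k j (ex v))

theorem term_bound (α : ℝ) (hα : -1 < α) {N : ℕ} (u v : Fin N → ℝ) (R : ℝ)
    (hu : ‖u‖ ≤ R) (hv : ‖v‖ ≤ R) (i j k : ℕ) :
    ‖cc α k * (nH k i (ex u) * nH k j (ex v))‖ ≤ cc α k * ((1 + R) * (1 + R)) ^ k := by
  have hR : 0 ≤ R := (norm_nonneg u).trans hu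
  rw [norm_mul, Real.norm_of_nonneg (cc_pos α hα k).le, mul_pow, norm_mul]
  refine mul_le_mul_of_nonneg_left ?_ (cc_pos α hα k).le
  exact mul_le_mul (nH_bound _ R hR (fun l => (ex_bound u l).trans hu) k i)
    (nH_bound _ R hR (fun l => (ex_bound v l).trans hv) k j) (abs_nonneg _) (by positivity)

theorem nG_summable (α : ℝ) (hα : -1 < α) {N : ℕ} (u v : Fin N → ℝ) (i j : ℕ) :
    Summable fun k => cc α k * (nH k i (ex u) * nH k j (ex v)) := by
  have hR : 0 ≤ max ‖u‖ ‖v‖ := (norm_nonneg u).trans (le_max_left _ _)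
  exact Summable.of_norm_bounded
    (cc_summable α hα ((1 + max ‖u‖ ‖v‖) * (1 + max ‖u‖ ‖v‖)) (by positivity))
    (fun k => term_bound α hα u v _ (le_max_left _ _) (le_max_right _ _) i j k)

theorem nG_cont (α : ℝ) (hα : -1 < α) {N : ℕ} :
    Continuous fun p : (Fin N → ℝ) × (Fin N → ℝ) => nG α p.1 p.2 := by
  refine continuous_iff_continuousAt.2 fun q => ?_
  refine tendsto_pi_nhds.2 fun i => tendsto_pi_nhds.2 fun j => ?_
  simp only [nG, Matrix.of_apply]
  have hR : 0 ≤ ‖q‖ + 1 := by positivity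
  refine tendsto_tsum_of_dominated_convergence
    (cc_summable α hα ((1 + (‖q‖ + 1)) * (1 + (‖q‖ + 1))) (by positivity)) ?_ ?_
  · intro k
    have h1 := (nH_cont k i).comp (ex_cont (N := N))
    have h2 := (nH_cont k j).comp (ex_cont (N := N))
    have h3 : Continuous fun p : (Fin N → ℝ) × (Fin N → ℝ) =>
        cc α k * (nH k i (ex p.1) * nH k j (ex p.2)) :=
      continuous_const.mul ((h1.comp continuous_fst).mul (h2.comp continuous_snd))
    exact h3.tendsto q
  · have : ∀ᶠ p : (Fin N → ℝ) × (Fin N → ℝ) in nhds q, ‖p‖ < ‖q‖ + 1 :=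
      continuous_norm.continuousAt.eventually_lt continuousAt_const (by simp)
    filter_upwards [this] with p hp k
    exact term_bound α hα p.1 p.2 _ ((norm_fst_le p).trans hp.le) ((norm_snd_le p).trans hp.le)
      i j k

theorem nG_det (α : ℝ) {N : ℕ} (u : Fin N → ℝ) :
    (nG α u 0).det = ∏ k : Fin N, cc α k := by
  have h : ∀ i j : Fin N, nG α u 0 i j = cc α j * nH j i (ex u) := by
    intro i j
    simp only [nG, Matrix.of_apply, ex_zero, nH_zero]
    rw [tsum_eq_single (j : ℕ)]
    · simp
    · intro k hk; simp [hk]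
  rw [Matrix.det_of_isUpperTriangular]
  · simp [h, nH_diag]
  · intro i j hij
    have hij' : (j : ℕ) < (i : ℕ) := hij
    rw [h, nH_lt _ _ _ hij', mul_zero]

theorem factor (α : ℝ) (hα : -1 < α) {N : ℕ} (u v : Fin N → ℝ) (i j : Fin N) :
    (nA u * nG α u v * (nA v).transpose) i j = ∑' k, cc α k * (u i * v j) ^ k := by
  obtain ⟨m, rfl⟩ : ∃ m, N = m + 1 := ⟨N - 1, by have := i.2; omega⟩
  have hk : ∀ k, cc α k * (u i * v j) ^ k = ∑ b : Fin (m+1), ∑ a : Fin (m+1),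
      nu (ex u) a (u i) * (cc α k * (nH k a (ex u) * nH k b (ex v))) * nu (ex v) b (v j) := by
    intro k
    rw [mul_pow, newton (ex u) m (u i) (nu_vanish u i _ i.2) k,
      newton (ex v) m (v j) (nu_vanish v j _ j.2) k,
      ← Fin.sum_univ_eq_sum_range (fun a => nH k a (ex u) * nu (ex u) a (u i)),
      ← Fin.sum_univ_eq_sum_range (fun a => nH k a (ex v) * nu (ex v) a (v j)),
      Finset.sum_mul_sum, Finset.mul_sum]
    simp only [Finset.mul_sum]
    rw [Finset.sum_comm]
    refine Finset.sum_congr rfl fun b _ => Finset.sum_congr rfl fun a _ => ?_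
    ring
  have hs : ∀ a b : Fin (m+1), Summable fun k =>
      nu (ex u) a (u i) * (cc α k * (nH k a (ex u) * nH k b (ex v))) * nu (ex v) b (v j) :=
    fun a b => ((nG_summable α hα u v a b).mul_left _).mul_right _
  simp only [hk]
  rw [Summable.tsum_finsetSum (fun b _ => summable_sum fun a _ => hs a b)]
  simp only [Matrix.mul_apply, Matrix.transpose_apply]
  refine Finset.sum_congr rfl fun b _ => ?_
  rw [Summable.tsum_finsetSum (fun a _ => hs a b), Finset.sum_mul]
  refine Finset.sum_congr rfl fun a _ => ?_
  rw [tsum_mul_right, tsum_mul_left]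
  rfl

theorem bessel_eq (α x y : ℝ) (hx : 0 < x) (hy : 0 < y) :
    (y ^ (α + 1) / x ^ α) * Real.exp (-(x ^ 2 + y ^ 2) / 2) * besselI α (x * y) =
      ((2:ℝ) ^ (-α) * Real.exp (-x ^ 2 / 2)) * (∑' k, cc α k * (x ^ 2 * (y ^ 2 / 4)) ^ k) *
        (y ^ (2 * α + 1) * Real.exp (-y ^ 2 / 2)) := by
  have h1 : besselI α (x * y) = (x ^ α * y ^ α * (2:ℝ) ^ (-α)) *
      ∑' k, cc α k * (x ^ 2 * (y ^ 2 / 4)) ^ k := by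
    unfold besselI
    rw [← tsum_mul_left]
    refine tsum_congr fun k => ?_
    have e1 : (x * y / 2) ^ (2 * (k : ℝ) + α) =
        (x ^ 2 * (y ^ 2 / 4)) ^ k * (x ^ α * y ^ α * (2:ℝ) ^ (-α)) := by
      have e2 : (x * y / 2) ^ α = x ^ α * y ^ α * (2:ℝ) ^ (-α) := by
        rw [Real.div_rpow (by positivity) (by norm_num), Real.mul_rpow hx.le hy.le,
          Real.rpow_neg (by norm_num)]
        ring
      rw [Real.rpow_add (by positivity), Real.rpow_mul (by positivity), Real.rpow_natCast, e2,
        Real.rpow_two]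
      congr 2
      ring
    rw [e1, cc]; ring
  have h2 : Real.exp (-(x ^ 2 + y ^ 2) / 2) = Real.exp (-x ^ 2 / 2) * Real.exp (-y ^ 2 / 2) := by
    rw [← Real.exp_add]; congr 1; ring
  have h3 : y ^ (2 * α + 1) = y ^ (α + 1) * y ^ α := by
    rw [← Real.rpow_add hy]; congr 1; ring
  have hxa := (Real.rpow_pos_of_pos hx α).ne'
  rw [h1, h2, h3]
  field_simp

theorem vp_sq {N : ℕ} (x : Fin N → ℝ) : vandermondeProd (fun k => x k ^ 2) =
    vandermondeProd x *
      ∏ p ∈ Finset.univ.filter (fun p : Fin N × Fin N => p.1 < p.2), (x p.2 + x p.1) := by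
  unfold vandermondeProd
  rw [← Finset.prod_mul_distrib]
  refine Finset.prod_congr rfl fun p _ => ?_
  ring

theorem vp_div {N : ℕ} (x : Fin N → ℝ) : vandermondeProd (fun k => x k / 4) =
    vandermondeProd x * (1 / 4) ^ (N * (N - 1) / 2) := by
  unfold vandermondeProd
  rw [← pairs_card, ← Finset.prod_const, ← Finset.prod_mul_distrib]
  refine Finset.prod_congr rfl fun p _ => ?_
  ring

theorem vp_ne {N : ℕ} (x : Fin N → ℝ) (h : Function.Injective x) : vandermondeProd x ≠ 0 := by
  unfold vandermondeProd
  refine Finset.prod_ne_zero_iff.2 fun p hp => ?_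
  have := (Finset.mem_filter.1 hp).2
  exact sub_ne_zero.2 fun e => this.ne' (h e)

theorem stmt_6 (α : ℝ) (hα : -1 < α) (N : ℕ) (hN : 1 ≤ N) (a : ℝ) (ha : 0 < a) :
    Filter.Tendsto
      (fun p : (Fin N → ℝ) × (Fin N → ℝ) =>
        (Matrix.of fun i j : Fin N =>
          ((p.2 j) ^ (α + 1) / (p.1 i) ^ α) *
            Real.exp (-((p.1 i) ^ 2 + (p.2 j) ^ 2) / 2) * besselI α (p.1 i * p.2 j)).det /
          ((∏ k : Fin N, (p.2 k) ^ (2 * α + 1)) * vandermondeProd p.1 *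
            vandermondeProd (fun k : Fin N => (p.2 k) ^ 2)))
      (nhdsWithin ((fun _ => a), 0)
        {p : (Fin N → ℝ) × (Fin N → ℝ) |
          (Function.Injective p.1 ∧ ∀ i, 0 < p.1 i) ∧
            (Function.Injective p.2 ∧ ∀ i, 0 < p.2 i)})
      (nhds (a ^ (N * (N - 1) / 2) * Real.exp (-a ^ 2 * (N : ℝ) / 2) *
        (2 : ℝ) ^ (-((N : ℝ) * ((N : ℝ) - 1 + 2 * α)) / 2) /
          ∏ k : Fin N, (Real.Gamma ((k : ℕ) + 1) * Real.Gamma (α + (k : ℕ) + 1)))) := by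
  set Φ : (Fin N → ℝ) × (Fin N → ℝ) → ℝ := fun p =>
    (∏ i : Fin N, ((2:ℝ) ^ (-α) * Real.exp (-(p.1 i) ^ 2 / 2))) *
      (∏ j : Fin N, Real.exp (-(p.2 j) ^ 2 / 2)) *
      (nG α (fun k => p.1 k ^ 2) (fun k => p.2 k ^ 2 / 4)).det *
      (∏ q ∈ Finset.univ.filter (fun q : Fin N × Fin N => q.1 < q.2), (p.1 q.2 + p.1 q.1)) *
      (1 / 4) ^ (N * (N - 1) / 2) with hΦ
  have hcont : Continuous Φ := by
    have hg : Continuous fun p : (Fin N → ℝ) × (Fin N → ℝ) =>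
        (nG α (fun k => p.1 k ^ 2) (fun k => p.2 k ^ 2 / 4)).det := by
      refine Continuous.matrix_det ?_
      exact (nG_cont α hα (N := N)).comp
        (g := fun p : (Fin N → ℝ) × (Fin N → ℝ) => nG α p.1 p.2)
        (f := fun p : (Fin N → ℝ) × (Fin N → ℝ) => (fun k => p.1 k ^ 2, fun k => p.2 k ^ 2 / 4))
        (by fun_prop)
    rw [hΦ]
    fun_prop
  have hval : Φ ((fun _ => a), 0) = a ^ (N * (N - 1) / 2) * Real.exp (-a ^ 2 * (N : ℝ) / 2) *
        (2 : ℝ) ^ (-((N : ℝ) * ((N : ℝ) - 1 + 2 * α)) / 2) /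
          ∏ k : Fin N, (Real.Gamma ((k : ℕ) + 1) * Real.Gamma (α + (k : ℕ) + 1)) := by
    have z : (fun k : Fin N => (0 : Fin N → ℝ) k ^ 2 / 4) = 0 := by ext; simp
    have hC : ((N * (N - 1) / 2 : ℕ) : ℝ) = (N : ℝ) * ((N : ℝ) - 1) / 2 := by
      rw [Nat.cast_div (Nat.even_mul_pred_self N).two_dvd (by norm_num)]
      push_cast [Nat.cast_sub hN]; ring
    have hcc : ∏ k : Fin N, cc α k =
        (∏ k : Fin N, (Real.Gamma ((k : ℕ) + 1) * Real.Gamma (α + (k : ℕ) + 1)))⁻¹ := by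
      rw [← Finset.prod_inv_distrib]
      refine Finset.prod_congr rfl fun k _ => ?_
      rw [cc, Real.Gamma_nat_eq_factorial, one_div, add_comm α]
    simp only [hΦ, z, nG_det, hcc]
    rw [Finset.prod_const, Finset.prod_const, pairs_card, Finset.card_univ, Fintype.card_fin]
    have h2 : (2 : ℝ) ^ (-((N : ℝ) * ((N : ℝ) - 1 + 2 * α)) / 2) =
        ((2:ℝ) ^ (-α)) ^ N * ((1:ℝ) / 2) ^ (N * (N - 1) / 2) := by
      rw [one_div, inv_pow, ← Real.rpow_natCast (2:ℝ) (N * (N-1) / 2), hC,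
        ← Real.rpow_neg (by norm_num), ← Real.rpow_natCast, ← Real.rpow_mul (by norm_num),
        ← Real.rpow_add (by norm_num)]
      congr 1; ring
    have h3 : Real.exp (-a ^ 2 * (N : ℝ) / 2) = Real.exp (-a ^ 2 / 2) ^ N := by
      rw [← Real.exp_nat_mul]; congr 1; ring
    have h4 : (a + a) ^ (N * (N - 1) / 2) * (1 / 4) ^ (N * (N - 1) / 2) =
        a ^ (N * (N - 1) / 2) * ((1:ℝ) / 2) ^ (N * (N - 1) / 2) := by
      rw [← mul_pow, ← mul_pow]; congr 1; ring
    rw [h2, h3, mul_assoc _ ((a + a) ^ _), h4, mul_pow]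
    simp
    ring
  rw [← hval]
  refine ((hcont.tendsto _).mono_left nhdsWithin_le_nhds).congr' ?_
  filter_upwards [self_mem_nhdsWithin] with p hp
  obtain ⟨⟨hx, hx0⟩, hy, hy0⟩ := hp
  have hy2 : Function.Injective fun k => p.2 k ^ 2 := by
    intro i j h
    exact hy ((pow_left_inj₀ (hy0 i).le (hy0 j).le two_ne_zero).1 h)
  have hM : (Matrix.of fun i j : Fin N =>
          ((p.2 j) ^ (α + 1) / (p.1 i) ^ α) *
            Real.exp (-((p.1 i) ^ 2 + (p.2 j) ^ 2) / 2) * besselI α (p.1 i * p.2 j)) =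
      Matrix.diagonal (fun i => (2:ℝ) ^ (-α) * Real.exp (-(p.1 i) ^ 2 / 2)) *
        (nA (fun k => p.1 k ^ 2) * nG α (fun k => p.1 k ^ 2) (fun k => p.2 k ^ 2 / 4) *
          (nA (fun k => p.2 k ^ 2 / 4)).transpose) *
        Matrix.diagonal (fun j => (p.2 j) ^ (2 * α + 1) * Real.exp (-(p.2 j) ^ 2 / 2)) := by
    ext i j
    rw [Matrix.mul_diagonal, Matrix.diagonal_mul, factor α hα, Matrix.of_apply,
      bessel_eq α _ _ (hx0 i) (hy0 j)]
  have n1 := vp_ne _ hx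
  have n2 := vp_ne _ hy2
  have n3 : ∏ k : Fin N, (p.2 k) ^ (2 * α + 1) ≠ 0 :=
    Finset.prod_ne_zero_iff.2 fun k _ => (Real.rpow_pos_of_pos (hy0 k) _).ne'
  rw [hM, Matrix.det_mul, Matrix.det_mul, Matrix.det_mul, Matrix.det_mul, Matrix.det_diagonal,
    Matrix.det_diagonal, Matrix.det_transpose, nA_det, nA_det, vp_sq,
    vp_div (fun k => p.2 k ^ 2), Finset.prod_mul_distrib (f := fun j => (p.2 j) ^ (2 * α + 1)),
    eq_div_iff (mul_ne_zero (mul_ne_zero n3 n1) n2)]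
  simp only [hΦ]
  ring
end

section
/- Let α > −1 be real and N ≥ 1. For tuples x = (x_1,…,x_N) and y = (y_1,…,y_N), each of pairwise distinct positive reals, define q(x,y) := det_{1≤i,j≤N}[ (y_j^{α+1} / x_i^α) · e^{−(x_i² + y_j²)/2} · I_α(x_i y_j) ]. Then, as (x, y) tends to ((0,…,0), (0,…,0)) through such tuples, the ratio q(x,y) / ( (∏_{k=1}^N y_k^{2α+1}) · Δ(x²) · Δ(y²) ) converges to 2^{−N(N−1+α)} / ∏_{k=1}^N ( Γ(k) · Γ(α+k) ). -/
open Filter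

/-- coefficients of `x^k` in the Newton basis at nodes `u` -/
noncomputable def newtonP (u : ℕ → ℝ) : ℕ → ℕ → ℝ
  | 0, m => if m = 0 then 1 else 0
  | k + 1, 0 => u 0 * newtonP u k 0
  | k + 1, m + 1 => newtonP u k m + u (m + 1) * newtonP u k (m + 1)

noncomputable def newtonB (u : ℕ → ℝ) (m : ℕ) (x : ℝ) : ℝ := ∏ l ∈ Finset.range m, (x - u l)

lemma newtonP_continuous (k : ℕ) : ∀ m, Continuous (fun u : ℕ → ℝ => newtonP u k m) := by
  induction k with
  | zero => intro m; simp only [newtonP]; exact continuous_const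
  | succ k ih =>
    intro m
    cases m with
    | zero => simp only [newtonP]; exact (continuous_apply 0).mul (ih 0)
    | succ m => simp only [newtonP]; exact (ih m).add ((continuous_apply (m+1)).mul (ih (m+1)))

lemma newtonP_zero (k : ℕ) : ∀ m, newtonP 0 k m = if m = k then 1 else 0 := by
  induction k with
  | zero => intro m; simp [newtonP]
  | succ k ih =>
    intro m
    cases m with
    | zero => simp [newtonP]
    | succ m => simp [newtonP, ih]

lemma newtonP_bound (u : ℕ → ℝ) (hu : ∀ n, |u n| ≤ 1) (k : ℕ) : ∀ m, |newtonP u k m| ≤ 2 ^ k := by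
  induction k with
  | zero => intro m; simp only [newtonP]; split_ifs <;> simp
  | succ k ih =>
    have key : ∀ m, |u m * newtonP u k m| ≤ 2 ^ k := by
      intro m
      rw [abs_mul]
      calc |u m| * |newtonP u k m| ≤ 1 * 2 ^ k :=
            mul_le_mul (hu m) (ih m) (abs_nonneg _) zero_le_one
        _ = 2 ^ k := one_mul _
    intro m
    have h2 : (0:ℝ) < 2 ^ k := by positivity
    cases m with
    | zero => simp only [newtonP]; rw [pow_succ]; linarith [key 0]
    | succ m =>
      simp only [newtonP]; rw [pow_succ]
      have := abs_add_le (newtonP u k m) (u (m+1) * newtonP u k (m+1))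
      linarith [key (m+1), ih m]

lemma newtonB_zero (u : ℕ → ℝ) {m i : ℕ} (h : i < m) : newtonB u m (u i) = 0 :=
  Finset.prod_eq_zero (Finset.mem_range.2 h) (sub_self _)

lemma newton_expand (u : ℕ → ℝ) (N i : ℕ) (hi : i < N) (k : ℕ) :
    (u i) ^ k = ∑ m ∈ Finset.range N, newtonP u k m * newtonB u m (u i) := by
  obtain ⟨N, rfl⟩ : ∃ M, N = M + 1 := ⟨N - 1, by omega⟩
  induction k with
  | zero => simp [newtonP, newtonB]
  | succ k ih =>
    have h1 : ∀ m, newtonB u (m+1) (u i) = newtonB u m (u i) * (u i - u m) := by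
      intro m; simp [newtonB, Finset.prod_range_succ]
    have h0 := newtonB_zero u hi
    rw [pow_succ, ih, Finset.sum_mul]
    have e1 : ∑ m ∈ Finset.range (N+1), newtonP u k m * newtonB u m (u i) * u i
        = ∑ m ∈ Finset.range (N+1), newtonP u k m * newtonB u (m+1) (u i)
          + ∑ m ∈ Finset.range (N+1), u m * newtonP u k m * newtonB u m (u i) := by
      rw [← Finset.sum_add_distrib]
      refine Finset.sum_congr rfl fun m _ => ?_
      rw [h1]; ring
    rw [e1, Finset.sum_range_succ, h0, Finset.sum_range_succ', Finset.sum_range_succ']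
    simp only [newtonP, add_mul, Finset.sum_add_distrib]
    ring

noncomputable def newtonD (c : ℕ → ℝ) (N : ℕ) (u v : ℕ → ℝ) : Matrix (Fin N) (Fin N) ℝ :=
  Matrix.of fun m n => ∑' k, c k * newtonP u k m * newtonP v k n

noncomputable def newtonL (N : ℕ) (u : ℕ → ℝ) : Matrix (Fin N) (Fin N) ℝ :=
  Matrix.of fun i m => newtonB u m (u i)

lemma term_bound_s7 (c : ℕ → ℝ) (hc : ∀ k, 0 ≤ c k) (u v : ℕ → ℝ)
    (hu : ∀ n, |u n| ≤ 1) (hv : ∀ n, |v n| ≤ 1) (k m n : ℕ) :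
    ‖c k * newtonP u k m * newtonP v k n‖ ≤ c k * 4 ^ k := by
  rw [Real.norm_eq_abs, abs_mul, abs_mul, abs_of_nonneg (hc k), mul_assoc]
  have : (4:ℝ) ^ k = 2 ^ k * 2 ^ k := by rw [← mul_pow]; norm_num
  rw [this]
  exact mul_le_mul_of_nonneg_left (mul_le_mul (newtonP_bound u hu k m) (newtonP_bound v hv k n)
    (abs_nonneg _) (by positivity)) (hc k)

lemma factor_mat (c : ℕ → ℝ) (hc : ∀ k, 0 ≤ c k) (hs : Summable fun k => c k * 4 ^ k)
    (N : ℕ) (u v : ℕ → ℝ) (hu : ∀ n, |u n| ≤ 1) (hv : ∀ n, |v n| ≤ 1) :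
    (Matrix.of fun i j : Fin N => ∑' k, c k * (u i * v j) ^ k)
      = newtonL N u * newtonD c N u v * (newtonL N v).transpose := by
  ext i j
  have hD : ∀ m n : Fin N, HasSum (fun k => c k * newtonP u k m * newtonP v k n)
      (newtonD c N u v m n) := fun m n =>
    (Summable.of_norm_bounded hs (fun k => term_bound_s7 c hc u v hu hv k m n)).hasSum
  have h := hasSum_sum (s := Finset.univ) (fun n _ =>
    (hasSum_sum (s := Finset.univ) (fun m _ =>
      (hD m n).mul_left (newtonL N u i m))).mul_right (newtonL N v j n))
  simp only [Matrix.mul_apply, Matrix.of_apply, Matrix.transpose_apply]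
  rw [← h.tsum_eq]
  refine tsum_congr fun k => ?_
  rw [mul_pow, newton_expand u N i i.2 k, newton_expand v N j j.2 k, Finset.sum_range,
    Finset.sum_range, Finset.sum_mul_sum, Finset.mul_sum]
  simp only [Finset.mul_sum, Finset.sum_mul]
  rw [Finset.sum_comm]
  refine Finset.sum_congr rfl fun m _ => Finset.sum_congr rfl fun n _ => ?_
  simp only [newtonL, Matrix.of_apply]
  ring

lemma det_newtonL (N : ℕ) (u : ℕ → ℝ) :
    (newtonL N u).det = vandermondeProd (fun i : Fin N => u i) := by
  rw [Matrix.det_of_lowerTriangular]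
  · simp only [newtonL, Matrix.of_apply, newtonB, vandermondeProd]
    rw [Finset.prod_filter, ← Finset.univ_product_univ, Finset.prod_product_right]
    refine Finset.prod_congr rfl fun i _ => ?_
    rw [← Finset.prod_filter]
    symm
    refine Finset.prod_bij (fun a _ => (a : ℕ)) ?_ ?_ ?_ ?_
    · intro a ha; simpa using ha
    · intro a _ b _ h; exact Fin.ext h
    · intro b hb
      have hb' := Finset.mem_range.1 hb
      exact ⟨⟨b, hb'.trans i.2⟩, Finset.mem_filter.2 ⟨Finset.mem_univ _, hb'⟩, rfl⟩
    · intro a _; rfl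
  · intro i j hij
    exact newtonB_zero u (by simpa using hij)

lemma tendsto_detD (c : ℕ → ℝ) (hc : ∀ k, 0 ≤ c k) (hs : Summable fun k => c k * 4 ^ k)
    (N : ℕ) {X : Type*} (l : Filter X) (u v : X → ℕ → ℝ)
    (hu : Tendsto u l (nhds 0)) (hv : Tendsto v l (nhds 0))
    (hu1 : ∀ᶠ p in l, ∀ n, |u p n| ≤ 1) (hv1 : ∀ᶠ p in l, ∀ n, |v p n| ≤ 1) :
    Tendsto (fun p => (newtonD c N (u p) (v p)).det) l (nhds (∏ k : Fin N, c k)) := by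
  rw [← Matrix.det_diagonal]
  refine (Continuous.matrix_det continuous_id).continuousAt.tendsto.comp ?_
  refine tendsto_pi_nhds.2 fun m => tendsto_pi_nhds.2 fun n => ?_
  change Tendsto (fun p => ∑' k, c k * newtonP (u p) k m * newtonP (v p) k n) l
    (nhds (Matrix.diagonal (fun k : Fin N => c k) m n))
  have e : Matrix.diagonal (fun k : Fin N => c k) m n
      = ∑' k, c k * newtonP 0 k m * newtonP 0 k n := by
    rw [tsum_eq_single (m : ℕ)]
    · simp [newtonP_zero, Matrix.diagonal_apply, Fin.ext_iff, eq_comm]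
    · intro k hk; simp [newtonP_zero, hk.symm]
  rw [e]
  refine tendsto_tsum_of_dominated_convergence hs ?_ ?_
  · intro k
    exact (((newtonP_continuous k m).continuousAt.tendsto.comp hu).const_mul (c k)).mul
      ((newtonP_continuous k n).continuousAt.tendsto.comp hv)
  · filter_upwards [hu1, hv1] with p h1 h2 k
    exact term_bound_s7 c hc _ _ h1 h2 k m n

noncomputable def bcoef (α : ℝ) (k : ℕ) : ℝ :=
  (1/4)^k / ((Nat.factorial k : ℝ) * Real.Gamma ((k : ℝ) + α + 1))

lemma gpos (α : ℝ) (hα : -1 < α) (k : ℕ) : 0 < Real.Gamma ((k : ℝ) + α + 1) :=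
  Real.Gamma_pos_of_pos (by have : (0:ℝ) ≤ k := k.cast_nonneg
                            linarith)

lemma bcoef_nonneg (α : ℝ) (hα : -1 < α) (k : ℕ) : 0 ≤ bcoef α k := by
  have := gpos α hα k
  unfold bcoef; positivity

lemma bcoef_summable (α : ℝ) (hα : -1 < α) : Summable fun k => bcoef α k * 4 ^ k := by
  have e : (fun k => bcoef α k * 4 ^ k)
      = fun k : ℕ => ((Nat.factorial k : ℝ) * Real.Gamma ((k : ℝ) + α + 1))⁻¹ := by
    funext k
    have : ((1:ℝ)/4)^k * 4^k = 1 := by rw [← mul_pow]; norm_num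
    rw [bcoef, div_mul_eq_mul_div, this, one_div]
  rw [e]
  refine summable_of_ratio_test_tendsto_lt_one (l := 0) zero_lt_one ?_ ?_
  · refine Eventually.of_forall fun k => ?_
    have := gpos α hα k
    positivity
  · have h1 : Tendsto (fun k : ℕ => ((k:ℝ) + 1)⁻¹ * ((k:ℝ) + (α + 1))⁻¹) atTop (nhds (0 * 0)) :=
      (tendsto_inv_atTop_zero.comp
        (tendsto_atTop_add_const_right _ _ tendsto_natCast_atTop_atTop)).mul
      (tendsto_inv_atTop_zero.comp
        (tendsto_atTop_add_const_right _ _ tendsto_natCast_atTop_atTop))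
    rw [mul_zero] at h1
    refine h1.congr fun k => ?_
    have hg := gpos α hα k
    have hk : (0:ℝ) < (k:ℝ) + α + 1 := by
      have : (0:ℝ) ≤ k := k.cast_nonneg
      linarith
    have hG : Real.Gamma (((k+1 : ℕ) : ℝ) + α + 1) = ((k:ℝ)+α+1) * Real.Gamma ((k:ℝ)+α+1) := by
      rw [← Real.Gamma_add_one hk.ne']; push_cast; ring_nf
    have hf : (0:ℝ) < Nat.factorial k := by positivity
    rw [hG, Nat.factorial_succ, Real.norm_of_nonneg (by positivity),
      Real.norm_of_nonneg (by positivity)]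
    push_cast
    rw [← add_assoc]
    field_simp

lemma entry_eq (α : ℝ) (x y : ℝ) (hx : 0 < x) (hy : 0 < y) :
    (y ^ (α + 1) / x ^ α) * Real.exp (-(x ^ 2 + y ^ 2) / 2) * besselI α (x * y)
      = Real.exp (-x^2/2) * (((2:ℝ) ^ (-α) * y ^ (2*α+1) * Real.exp (-y^2/2)) *
        ∑' k, bcoef α k * (x^2 * y^2)^k) := by
  have hI : besselI α (x*y) = (x ^ α * y ^ α * (2:ℝ)^(-α)) * ∑' k, bcoef α k * (x^2 * y^2)^k := by
    rw [besselI, ← tsum_mul_left]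
    refine tsum_congr fun k => ?_
    have hp : 0 < x * y / 2 := by positivity
    have : (x * y / 2) ^ (2 * (k:ℝ) + α) = (x ^ α * y ^ α * (2:ℝ)^(-α)) * ((1/4)^k * (x^2*y^2)^k) := by
      rw [Real.rpow_add hp, Real.rpow_mul hp.le, Real.rpow_natCast, Real.rpow_two,
        Real.div_rpow (by positivity) (by norm_num), Real.mul_rpow hx.le hy.le,
        Real.rpow_neg (by norm_num), ← mul_pow]
      have : (x * y / 2)^2 = 1/4 * (x^2*y^2) := by ring
      rw [this]; ring
    rw [this, bcoef]; ring
  have he : Real.exp (-(x ^ 2 + y ^ 2) / 2) = Real.exp (-x^2/2) * Real.exp (-y^2/2) := by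
    rw [← Real.exp_add]; ring_nf
  have hyy : y ^ (2*α+1) = y ^ (α+1) * y ^ α := by
    rw [← Real.rpow_add hy]; ring_nf
  have hxp : x ^ α ≠ 0 := (Real.rpow_pos_of_pos hx α).ne'
  rw [hI, he, hyy]
  field_simp

noncomputable def extSq {N : ℕ} (x : Fin N → ℝ) (n : ℕ) : ℝ :=
  if h : n < N then x ⟨n, h⟩ ^ 2 else 0

lemma extSq_apply {N : ℕ} (x : Fin N → ℝ) (i : Fin N) : extSq x i = x i ^ 2 := by
  simp [extSq]

lemma extSq_continuous {N : ℕ} : Continuous (extSq : (Fin N → ℝ) → ℕ → ℝ) := by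
  refine continuous_pi fun n => ?_
  unfold extSq
  split_ifs with h
  · fun_prop
  · fun_prop

lemma extSq_zero {N : ℕ} : extSq (0 : Fin N → ℝ) = 0 := by
  funext n; simp [extSq]

lemma extSq_bound {N : ℕ} : ∀ᶠ x : Fin N → ℝ in nhds 0, ∀ n, |extSq x n| ≤ 1 := by
  filter_upwards [Metric.ball_mem_nhds (0 : Fin N → ℝ) one_pos] with x hx n
  unfold extSq
  split_ifs with h
  · have h1 : ‖x ⟨n, h⟩‖ ≤ ‖x‖ := norm_le_pi_norm x _
    have h2 : ‖x‖ < 1 := by simpa using hx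
    rw [abs_pow]
    exact pow_le_one₀ (abs_nonneg _) (h1.trans h2.le)
  · simp

lemma vdm_ne {N : ℕ} (x : Fin N → ℝ) (hi : Function.Injective x) (hp : ∀ i, 0 < x i) :
    vandermondeProd (fun k : Fin N => (x k) ^ 2) ≠ 0 := by
  refine Finset.prod_ne_zero_iff.2 fun p hpp => ?_
  have hlt : p.1 < p.2 := by simpa using hpp
  intro h
  have : x p.2 = x p.1 := by
    have h' : x p.2 ^ 2 = x p.1 ^ 2 := by simpa [sub_eq_zero] using h
    exact (pow_left_inj₀ (hp _).le (hp _).le two_ne_zero).1 h'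
  exact hlt.ne (hi this).symm

lemma const_eq (α : ℝ) (N : ℕ) :
    (2 : ℝ) ^ (-((N : ℝ) * ((N : ℝ) - 1 + α))) /
        ∏ k : Fin N, (Real.Gamma ((k : ℕ) + 1) * Real.Gamma (α + (k : ℕ) + 1))
      = ((2:ℝ) ^ (-α)) ^ N * ∏ k : Fin N, bcoef α k := by
  have h : ∀ N : ℕ, (2 : ℝ) ^ (-((N : ℝ) * ((N : ℝ) - 1 + α)))
      = ((2:ℝ) ^ (-α)) ^ N * ∏ k ∈ Finset.range N, ((1:ℝ)/4)^k := by
    intro N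
    induction N with
    | zero => simp
    | succ N ih =>
      have e : -(((N+1:ℕ):ℝ) * (((N+1:ℕ):ℝ) - 1 + α))
          = -((N:ℝ) * ((N:ℝ) - 1 + α)) + (-α) + (-2) * (N:ℝ) := by push_cast; ring
      rw [e, Real.rpow_add two_pos, Real.rpow_add two_pos, ih, Finset.prod_range_succ,
        Real.rpow_mul two_pos.le, Real.rpow_natCast]
      have : (2:ℝ)^(-2:ℝ) = 1/4 := by
        rw [Real.rpow_neg two_pos.le, Real.rpow_two]; norm_num
      rw [this]; ring
  rw [h N, Finset.prod_range]
  simp only [bcoef, Finset.prod_div_distrib]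
  rw [mul_div_assoc]
  congr 2
  refine Finset.prod_congr rfl fun k _ => ?_
  rw [Real.Gamma_nat_eq_factorial, add_comm α]

theorem stmt_7 (α : ℝ) (hα : -1 < α) (N : ℕ) (hN : 1 ≤ N) :
    Filter.Tendsto
      (fun p : (Fin N → ℝ) × (Fin N → ℝ) =>
        (Matrix.of fun i j : Fin N =>
          ((p.2 j) ^ (α + 1) / (p.1 i) ^ α) *
            Real.exp (-((p.1 i) ^ 2 + (p.2 j) ^ 2) / 2) * besselI α (p.1 i * p.2 j)).det /
          ((∏ k : Fin N, (p.2 k) ^ (2 * α + 1)) *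
            vandermondeProd (fun k : Fin N => (p.1 k) ^ 2) *
            vandermondeProd (fun k : Fin N => (p.2 k) ^ 2)))
      (nhdsWithin (0, 0)
        {p : (Fin N → ℝ) × (Fin N → ℝ) |
          (Function.Injective p.1 ∧ ∀ i, 0 < p.1 i) ∧
            (Function.Injective p.2 ∧ ∀ i, 0 < p.2 i)})
      (nhds ((2 : ℝ) ^ (-((N : ℝ) * ((N : ℝ) - 1 + α))) /
        ∏ k : Fin N, (Real.Gamma ((k : ℕ) + 1) * Real.Gamma (α + (k : ℕ) + 1)))) := by
  rw [const_eq]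
  set S := {p : (Fin N → ℝ) × (Fin N → ℝ) |
          (Function.Injective p.1 ∧ ∀ i, 0 < p.1 i) ∧
            (Function.Injective p.2 ∧ ∀ i, 0 < p.2 i)} with hS
  have hf1 : Tendsto (fun p : (Fin N → ℝ) × (Fin N → ℝ) => p.1) (nhdsWithin (0,0) S) (nhds 0) :=
    (continuous_fst.tendsto ((0, 0) : (Fin N → ℝ) × (Fin N → ℝ))).mono_left nhdsWithin_le_nhds
  have hf2 : Tendsto (fun p : (Fin N → ℝ) × (Fin N → ℝ) => p.2) (nhdsWithin (0,0) S) (nhds 0) :=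
    (continuous_snd.tendsto ((0, 0) : (Fin N → ℝ) × (Fin N → ℝ))).mono_left nhdsWithin_le_nhds
  have hx0 : Tendsto (extSq : (Fin N → ℝ) → ℕ → ℝ) (nhds 0) (nhds 0) := by
    simpa [extSq_zero] using (extSq_continuous (N := N)).tendsto 0
  have hb1 := hf1.eventually (extSq_bound (N := N))
  have hb2 := hf2.eventually (extSq_bound (N := N))
  have hdet := tendsto_detD (bcoef α) (bcoef_nonneg α hα) (bcoef_summable α hα) N _ _ _
    (hx0.comp hf1) (hx0.comp hf2) hb1 hb2
  have hex : Tendsto (fun x : Fin N → ℝ => ∏ i, Real.exp (-(x i)^2/2)) (nhds 0) (nhds 1) := by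
    have hc : Continuous (fun x : Fin N → ℝ => ∏ i, Real.exp (-(x i)^2/2)) := by fun_prop
    simpa using hc.tendsto 0
  have hlim := ((hex.comp hf1).mul (hex.comp hf2)).mul (hdet.const_mul (((2:ℝ) ^ (-α)) ^ N))
  rw [one_mul, one_mul] at hlim
  refine hlim.congr' ?_
  filter_upwards [hb1, hb2, self_mem_nhdsWithin] with p h1 h2 hp
  obtain ⟨⟨hi1, hp1⟩, hi2, hp2⟩ := hp
  have hM : (Matrix.of fun i j : Fin N =>
          ((p.2 j) ^ (α + 1) / (p.1 i) ^ α) *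
            Real.exp (-((p.1 i) ^ 2 + (p.2 j) ^ 2) / 2) * besselI α (p.1 i * p.2 j))
      = Matrix.of fun i j : Fin N => Real.exp (-(p.1 i)^2/2) *
        (Matrix.of fun i j : Fin N =>
          ((2:ℝ) ^ (-α) * p.2 j ^ (2*α+1) * Real.exp (-(p.2 j)^2/2)) *
          (Matrix.of fun i j : Fin N =>
            ∑' k, bcoef α k * (extSq p.1 i * extSq p.2 j)^k) i j) i j := by
    ext i j
    simp only [Matrix.of_apply, extSq_apply]
    exact entry_eq α _ _ (hp1 i) (hp2 j)
  rw [hM, Matrix.det_mul_column, Matrix.det_mul_row,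
    factor_mat _ (bcoef_nonneg α hα) (bcoef_summable α hα) N _ _ h1 h2, Matrix.det_mul,
    Matrix.det_mul, Matrix.det_transpose, det_newtonL, det_newtonL]
  simp only [extSq_apply, Finset.prod_mul_distrib, Finset.prod_const, Finset.card_univ,
    Fintype.card_fin, Function.comp_apply]
  have n1 := vdm_ne _ hi1 hp1
  have n2 := vdm_ne _ hi2 hp2
  have n3 : ∏ k : Fin N, (p.2 k) ^ (2 * α + 1) ≠ 0 :=
    Finset.prod_ne_zero_iff.2 fun k _ => (Real.rpow_pos_of_pos (hp2 k) _).ne'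
  rw [eq_div_iff (mul_ne_zero (mul_ne_zero n3 n1) n2)]
  ring
end
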